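/- Let R ∈ ℝ and 𝔎, 𝔟, 𝔠 ∈ ℂ with 𝔠 ≠ 0 and 𝔟 + 𝔠·ψ ≠ 0 for every ψ ∈ [−1,1]. Define the complex constants C₁ = 𝔎R²/(𝔠(𝔟²−𝔠²)) + conj(𝔎)R²/(conj(𝔠)(conj(𝔟)²−conj(𝔠)²)) and C₂ = −𝔎R²𝔟/(𝔠²(𝔟²−𝔠²)) − conj(𝔎)R²·conj(𝔟)/(conj(𝔠)²(conj(𝔟)²−conj(𝔠)²)), and define F : ℝ → ℂ by F(ψ) = C₂ + C₁ψ + 𝔎R²/(𝔠²(𝔟+𝔠ψ)) + conj(𝔎)R²/(conj(𝔠)²(conj(𝔟)+conj(𝔠)ψ)). Then: (i) F is real-valued, i.e. conj(F(ψ)) = F(ψ) for all ψ ∈ [−1,1]; (ii) F(−1) = 0 and F(1) = 0; and (iii) for every ψ ∈ [−1,1], F″(ψ) = 2·(𝔎R²/(𝔟+𝔠ψ)³ + conj(𝔎)R²/(conj(𝔟)+conj(𝔠)ψ)³). -/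

import Mathlib

/-!
Put `A = 𝔎R²`. The terms of `F` built from `𝔎`, `𝔟`, `𝔠` are the partial fraction expansion of
`g(ψ) = A(ψ² - 1) / ((𝔟² - 𝔠²)(𝔟 + 𝔠ψ))`, and the remaining ones are their conjugates, so that
`F = g + conj g` off the pole of `g`. This form shows reality and the zeros at `±1`, and
differentiating `g` twice gives `g″ = 2A/(𝔟 + 𝔠ψ)³`.
-/

open ComplexConjugate

open scoped Topology

lemma eventually_add_mul_ne_zero {𝕜 : Type*} [NontriviallyNormedField 𝕜] {p q x : 𝕜}
    (hx : p + q * x ≠ 0) : ∀ᶠ y in 𝓝 x, p + q * y ≠ 0 :=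
  ContinuousAt.eventually_ne (g := fun y => p + q * y) (by fun_prop) hx

/-- The solution of the boundary value problem `y″ = 2A / (p + q x)³`, `y(-1) = y(1) = 0`, in closed
form. Unlike its partial fraction expansion, it makes sense for `q = 0`. -/
def dirichletSolution {K : Type*} [Field K] (A p q x : K) : K :=
  A / (p ^ 2 - q ^ 2) * ((x ^ 2 - 1) / (p + q * x))

namespace dirichletSolution

section Field

variable {K : Type*} [Field K] {A p q x : K}

lemma eq_zero_of_sq_eq_one (hx : x ^ 2 = 1) : dirichletSolution A p q x = 0 := by
  simp [dirichletSolution, hx]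

lemma eq_partialFractions (hq : q ≠ 0) (hpq : p ^ 2 - q ^ 2 ≠ 0) (hx : p + q * x ≠ 0) :
    dirichletSolution A p q x =
      -(A * p / (q ^ 2 * (p ^ 2 - q ^ 2))) + A / (q * (p ^ 2 - q ^ 2)) * x +
        A / (q ^ 2 * (p + q * x)) := by
  rw [dirichletSolution]
  field_simp
  ring

end Field

section Deriv

variable {𝕜 : Type*} [NontriviallyNormedField 𝕜] {p q x : 𝕜}

lemma hasDerivAt (A : 𝕜) (hx : p + q * x ≠ 0) :
    HasDerivAt (dirichletSolution A p q)
      (A / (p ^ 2 - q ^ 2) * ((q * x ^ 2 + 2 * p * x + q) / (p + q * x) ^ 2)) x := by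
  have hnum : HasDerivAt (fun y : 𝕜 => y ^ 2 - 1) (2 * x) x := by
    simpa using (hasDerivAt_pow 2 x).sub_const 1
  have hden : HasDerivAt (fun y : 𝕜 => p + q * y) q x := by
    simpa using ((hasDerivAt_id x).const_mul q).const_add p
  refine ((hnum.fun_div hden hx).const_mul (A / (p ^ 2 - q ^ 2))).congr_deriv ?_
  ring

lemma hasDerivAt_deriv (A : 𝕜) (hpq : p ^ 2 - q ^ 2 ≠ 0) (hx : p + q * x ≠ 0) :
    HasDerivAt (deriv (dirichletSolution A p q)) (2 * (A / (p + q * x) ^ 3)) x := by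
  have hnum : HasDerivAt (fun y : 𝕜 => q * y ^ 2 + 2 * p * y + q) (2 * (p + q * x)) x := by
    refine ((((hasDerivAt_pow 2 x).const_mul q).fun_add
      ((hasDerivAt_id x).const_mul (2 * p))).add_const q).congr_deriv ?_
    push_cast
    ring
  have hden : HasDerivAt (fun y : 𝕜 => (p + q * y) ^ 2) (2 * (p + q * x) * q) x := by
    simpa using (((hasDerivAt_id x).const_mul q).const_add p).fun_pow 2
  have hderiv : deriv (dirichletSolution A p q) =ᶠ[𝓝 x] fun y =>
      A / (p ^ 2 - q ^ 2) * ((q * y ^ 2 + 2 * p * y + q) / (p + q * y) ^ 2) :=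
    (eventually_add_mul_ne_zero hx).mono fun _ hy => (hasDerivAt A hy).deriv
  refine (((hnum.fun_div hden (pow_ne_zero 2 hx)).const_mul
    (A / (p ^ 2 - q ^ 2))).congr_of_eventuallyEq hderiv).congr_deriv ?_
  field_simp
  ring

end Deriv

end dirichletSolution

lemma eventually_add_mul_ofReal_ne_zero {p q : ℂ} {x : ℝ} (hx : p + q * (x : ℂ) ≠ 0) :
    ∀ᶠ y : ℝ in 𝓝 x, p + q * (y : ℂ) ≠ 0 :=
  Complex.continuous_ofReal.continuousAt.eventually (eventually_add_mul_ne_zero hx)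

lemma hasDerivAt_deriv_add_conj {f f' : ℝ → ℂ} {f'' : ℂ} {x : ℝ}
    (hf : ∀ᶠ y in 𝓝 x, HasDerivAt f (f' y) y) (hf' : HasDerivAt f' f'' x) :
    HasDerivAt (deriv fun y => f y + conj (f y)) (f'' + conj f'') x :=
  (hf'.fun_add hf'.star).congr_of_eventuallyEq <|
    hf.mono fun _ hy => (hy.fun_add hy.star).deriv

lemma hasDerivAt_deriv_dirichletSolution_add_conj (A : ℂ) {p q : ℂ} {x : ℝ}
    (hpq : p ^ 2 - q ^ 2 ≠ 0) (hx : p + q * (x : ℂ) ≠ 0) :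
    HasDerivAt (deriv fun y : ℝ => dirichletSolution A p q y + conj (dirichletSolution A p q y))
      (2 * (A / (p + q * (x : ℂ)) ^ 3) + conj (2 * (A / (p + q * (x : ℂ)) ^ 3))) x :=
  hasDerivAt_deriv_add_conj
    ((eventually_add_mul_ofReal_ne_zero hx).mono fun _ hy =>
      (dirichletSolution.hasDerivAt A hy).differentiableAt.hasDerivAt.comp_ofReal)
    (dirichletSolution.hasDerivAt_deriv A hpq hx).comp_ofReal

theorem frame_coefficient_properties_general (R : ℝ) (𝔎 𝔟 𝔠 : ℂ) (hc : 𝔠 ≠ 0)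
    (hadd : 𝔟 + 𝔠 ≠ 0) (hsub : 𝔟 - 𝔠 ≠ 0)
    (C₁ C₂ : ℂ)
    (hC₁ : C₁ = 𝔎 * (R : ℂ) ^ 2 / (𝔠 * (𝔟 ^ 2 - 𝔠 ^ 2)) +
      conj 𝔎 * (R : ℂ) ^ 2 / (conj 𝔠 * ((conj 𝔟) ^ 2 - (conj 𝔠) ^ 2)))
    (hC₂ : C₂ = -(𝔎 * (R : ℂ) ^ 2 * 𝔟 / (𝔠 ^ 2 * (𝔟 ^ 2 - 𝔠 ^ 2))) -
      conj 𝔎 * (R : ℂ) ^ 2 * conj 𝔟 / ((conj 𝔠) ^ 2 * ((conj 𝔟) ^ 2 - (conj 𝔠) ^ 2)))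
    (F : ℝ → ℂ)
    (hF : ∀ ψ : ℝ, F ψ = C₂ + C₁ * (ψ : ℂ) + 𝔎 * (R : ℂ) ^ 2 / (𝔠 ^ 2 * (𝔟 + 𝔠 * (ψ : ℂ))) +
      conj 𝔎 * (R : ℂ) ^ 2 / ((conj 𝔠) ^ 2 * (conj 𝔟 + conj 𝔠 * (ψ : ℂ)))) :
    (∀ ψ : ℝ, 𝔟 + 𝔠 * (ψ : ℂ) ≠ 0 → conj (F ψ) = F ψ) ∧
    (F (-1) = 0 ∧ F 1 = 0) ∧
    (∀ ψ : ℝ, 𝔟 + 𝔠 * (ψ : ℂ) ≠ 0 →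
      HasDerivAt (deriv F) (2 * (𝔎 * (R : ℂ) ^ 2 / (𝔟 + 𝔠 * (ψ : ℂ)) ^ 3 +
        conj 𝔎 * (R : ℂ) ^ 2 / (conj 𝔟 + conj 𝔠 * (ψ : ℂ)) ^ 3)) ψ) := by
  have hbc : 𝔟 ^ 2 - 𝔠 ^ 2 ≠ 0 := by
    rw [sq_sub_sq]
    exact mul_ne_zero hadd hsub
  let g : ℝ → ℂ := fun ψ => dirichletSolution (𝔎 * (R : ℂ) ^ 2) 𝔟 𝔠 ψ
  have hFg (ψ : ℝ) (hψ : 𝔟 + 𝔠 * (ψ : ℂ) ≠ 0) : F ψ = g ψ + conj (g ψ) := by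
    simp only [g, hF, hC₁, hC₂, dirichletSolution.eq_partialFractions hc hbc hψ, map_add, map_sub,
      map_neg, map_mul, map_div₀, map_pow, Complex.conj_ofReal]
    ring
  have hF_zero (ψ : ℝ) (hsq : (ψ : ℂ) ^ 2 = 1) (hψ : 𝔟 + 𝔠 * (ψ : ℂ) ≠ 0) : F ψ = 0 := by
    simp [hFg ψ hψ, g, dirichletSolution.eq_zero_of_sq_eq_one hsq]
  refine ⟨fun ψ hψ => ?_, ⟨?_, ?_⟩, fun ψ hψ => ?_⟩
  · simp [hFg ψ hψ, add_comm]
  · exact hF_zero (-1) (by simp) (by simpa [← sub_eq_add_neg] using hsub)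
  · exact hF_zero 1 (by simp) (by simpa using hadd)
  · have hlocal : F =ᶠ[𝓝 ψ] fun y => g y + conj (g y) :=
      (eventually_add_mul_ofReal_ne_zero hψ).mono hFg
    refine ((hasDerivAt_deriv_dirichletSolution_add_conj _ hbc hψ).congr_of_eventuallyEq
      hlocal.deriv).congr_deriv ?_
    simp [mul_add, map_ofNat]

/-- The explicit solution `F = Q²` of the curvature equation on the bifurcation sphere:
`F` is real-valued on `[-1,1]`, vanishes at `ψ = ±1`, and satisfies
`F″(ψ) = 2(𝔎R²/(𝔟+𝔠ψ)³ + conj(𝔎)R²/(conj(𝔟)+conj(𝔠)ψ)³)` on `[-1,1]`. -/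
theorem frame_coefficient_properties (R : ℝ) (𝔎 𝔟 𝔠 : ℂ) (hc : 𝔠 ≠ 0)
    (h : ∀ ψ ∈ Set.Icc (-1 : ℝ) 1, 𝔟 + 𝔠 * (ψ : ℂ) ≠ 0)
    (C₁ C₂ : ℂ)
    (hC₁ : C₁ = 𝔎 * (R : ℂ) ^ 2 / (𝔠 * (𝔟 ^ 2 - 𝔠 ^ 2)) +
      conj 𝔎 * (R : ℂ) ^ 2 / (conj 𝔠 * ((conj 𝔟) ^ 2 - (conj 𝔠) ^ 2)))
    (hC₂ : C₂ = -(𝔎 * (R : ℂ) ^ 2 * 𝔟 / (𝔠 ^ 2 * (𝔟 ^ 2 - 𝔠 ^ 2))) -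
      conj 𝔎 * (R : ℂ) ^ 2 * conj 𝔟 / ((conj 𝔠) ^ 2 * ((conj 𝔟) ^ 2 - (conj 𝔠) ^ 2)))
    (F : ℝ → ℂ)
    (hF : ∀ ψ : ℝ, F ψ = C₂ + C₁ * (ψ : ℂ) + 𝔎 * (R : ℂ) ^ 2 / (𝔠 ^ 2 * (𝔟 + 𝔠 * (ψ : ℂ))) +
      conj 𝔎 * (R : ℂ) ^ 2 / ((conj 𝔠) ^ 2 * (conj 𝔟 + conj 𝔠 * (ψ : ℂ)))) :
    (∀ ψ ∈ Set.Icc (-1 : ℝ) 1, conj (F ψ) = F ψ) ∧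
    (F (-1) = 0 ∧ F 1 = 0) ∧
    (∀ ψ ∈ Set.Icc (-1 : ℝ) 1,
      deriv (deriv F) ψ = 2 * (𝔎 * (R : ℂ) ^ 2 / (𝔟 + 𝔠 * (ψ : ℂ)) ^ 3 +
        conj 𝔎 * (R : ℂ) ^ 2 / (conj 𝔟 + conj 𝔠 * (ψ : ℂ)) ^ 3)) := by
  obtain ⟨hreal, hzero, hderiv⟩ := frame_coefficient_properties_general R 𝔎 𝔟 𝔠 hc
    (by simpa using h 1 (by simp)) (by simpa [← sub_eq_add_neg] using h (-1) (by simp))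
    C₁ C₂ hC₁ hC₂ F hF
  exact ⟨fun ψ hψ => hreal ψ (h ψ hψ), hzero, fun ψ hψ => (hderiv ψ (h ψ hψ)).deriv⟩
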